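/- arXiv:math/9907094 — 2 statements merged into one kernel-verified Lean document; each statement's English description precedes it below -/
import Mathlib

section
/- Let L : ℝⁿ →L[ℝ] ℝⁿ be a continuous linear map, B a continuous bilinear map ℝⁿ → ℝⁿ → ℝⁿ, T a continuous trilinear map ℝⁿ → ℝⁿ → ℝⁿ → ℝⁿ, b ∈ ℝⁿ, f(x) = L x + B(x,x) + T(x,x,x) + b, and f̃(x) = L x + 2 • B(x,x) + 3 • T(x,x,x). Then for any two points x_k, x_{k-1} ∈ ℝⁿ, (D f(x_k))(x_k) − (D f(x_{k-1}))(x_{k-1}) = f̃(x_k) − f̃(x_{k-1}). -/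
/-!
By Euler's identity, the derivative of a homogeneous polynomial map of degree `d` at `x`, evaluated
at `x` itself, is `d` times its value there. Summing over the homogeneous parts of `f` gives
`D f(x) x = f̃(x)` at every point `x`, and the relation is the difference of this identity at two
points. Euler's identity itself follows by raising the degree one variable at a time: by the product
rule, `D (y ↦ u y y)(x) x = (D u(x) x) x + u x x`.
-/

section EulerIdentity

variable {𝕜 E F : Type*} [NontriviallyNormedField 𝕜]
  [NormedAddCommGroup E] [NormedSpace 𝕜 E] [NormedAddCommGroup F] [NormedSpace 𝕜 F]

theorem fderiv_clm_apply_self_apply_self {u : E → E →L[𝕜] F} {x : E}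
    (hu : DifferentiableAt 𝕜 u x) :
    fderiv 𝕜 (fun y => u y y) x x = fderiv 𝕜 u x x x + u x x := by
  simp [fderiv_clm_apply hu differentiableAt_fun_id, add_comm]

theorem fderiv_bilinear_diag_apply_self (B : E →L[𝕜] E →L[𝕜] F) (x : E) :
    fderiv 𝕜 (fun y => B y y) x x = 2 • B x x := by
  rw [fderiv_clm_apply_self_apply_self B.differentiableAt, B.fderiv, two_nsmul]

theorem fderiv_trilinear_diag_apply_self (T : E →L[𝕜] E →L[𝕜] E →L[𝕜] F) (x : E) :
    fderiv 𝕜 (fun y => T y y y) x x = 3 • T x x x := by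
  have hT : DifferentiableAt 𝕜 (fun y => T y y) x := by fun_prop
  rw [fderiv_clm_apply_self_apply_self hT, fderiv_bilinear_diag_apply_self,
    smul_apply, succ_nsmul _ 2]

theorem fderiv_cubic_apply_self (L : E →L[𝕜] F) (B : E →L[𝕜] E →L[𝕜] F)
    (T : E →L[𝕜] E →L[𝕜] E →L[𝕜] F) (b : F) (x : E) :
    fderiv 𝕜 (fun y => L y + B y y + T y y y + b) x x = L x + 2 • B x x + 3 • T x x x := by
  have hB : DifferentiableAt 𝕜 (fun y => B y y) x := by fun_prop
  have hT : DifferentiableAt 𝕜 (fun y => T y y y) x := by fun_prop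
  have hLB : DifferentiableAt 𝕜 (fun y => L y + B y y) x := L.differentiableAt.fun_add hB
  rw [fderiv_add_const, fderiv_fun_add hLB hT, fderiv_fun_add L.differentiableAt hB, L.fderiv,
    add_apply, add_apply, fderiv_bilinear_diag_apply_self, fderiv_trilinear_diag_apply_self]

theorem exact_quasi_newton_relation_general (L : E →L[𝕜] F) (B : E →L[𝕜] E →L[𝕜] F)
    (T : E →L[𝕜] E →L[𝕜] E →L[𝕜] F) (b : F) (f ftilde : E → F)
    (hf : ∀ x, f x = L x + B x x + T x x x + b)
    (hft : ∀ x, ftilde x = L x + 2 • B x x + 3 • T x x x) (xk xk1 : E) :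
    fderiv 𝕜 f xk xk - fderiv 𝕜 f xk1 xk1 = ftilde xk - ftilde xk1 := by
  have fderiv_apply_self (x : E) : fderiv 𝕜 f x x = ftilde x := by
    rw [funext hf, fderiv_cubic_apply_self, hft]
  rw [fderiv_apply_self, fderiv_apply_self]

end EulerIdentity

theorem exact_quasi_newton_relation (n : ℕ)
    (L : EuclideanSpace ℝ (Fin n) →L[ℝ] EuclideanSpace ℝ (Fin n))
    (B : EuclideanSpace ℝ (Fin n) →L[ℝ] EuclideanSpace ℝ (Fin n) →L[ℝ] EuclideanSpace ℝ (Fin n))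
    (T : EuclideanSpace ℝ (Fin n) →L[ℝ] EuclideanSpace ℝ (Fin n) →L[ℝ]
         EuclideanSpace ℝ (Fin n) →L[ℝ] EuclideanSpace ℝ (Fin n))
    (b : EuclideanSpace ℝ (Fin n))
    (f ftilde : EuclideanSpace ℝ (Fin n) → EuclideanSpace ℝ (Fin n))
    (hf : ∀ x, f x = L x + B x x + T x x x + b)
    (hft : ∀ x, ftilde x = L x + 2 • B x x + 3 • T x x x)
    (xk xk1 : EuclideanSpace ℝ (Fin n)) :
    (fderiv ℝ f xk) xk - (fderiv ℝ f xk1) xk1 = ftilde xk - ftilde xk1 :=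
  exact_quasi_newton_relation_general L B T b f ftilde hf hft xk xk1
end

section
/- Let J_{k-1} be an n × n real matrix, let x_{k-1}, x_k, y ∈ ℝⁿ, set p = x_k − x_{k-1}, and assume pᵀ x_k ≠ 0. Define u = (1 / (pᵀ x_k)) • (y − J_{k-1} p) and J_k = J_{k-1} + u pᵀ (a rank-one update). Then J_k satisfies the exact update equation J_k x_k = J_{k-1} x_{k-1} + y; equivalently, J_k (x_k − x_{k-1}) = −J_k x_{k-1} + J_{k-1} x_{k-1} + y. -/
section

open Matrix

variable {m n : Type*} [Fintype n]

theorem vecMulVec_inv_dotProduct_smul_mulVec {K : Type*} [Field K] (r : m → K) {v w : n → K}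
    (hvw : v ⬝ᵥ w ≠ 0) : vecMulVec ((v ⬝ᵥ w)⁻¹ • r) v *ᵥ w = r := by
  rw [vecMulVec_mulVec, op_smul_eq_smul, smul_inv_smul₀ hvw]

theorem mulVec_sub_eq_neg_mulVec_add_iff {R : Type*} [NonUnitalNonAssocRing R] (B : Matrix m n R)
    (x z : n → R) (c : m → R) : B *ᵥ (x - z) = -(B *ᵥ z) + c ↔ B *ᵥ x = c := by
  rw [mulVec_sub, sub_eq_neg_add, add_right_inj]

theorem modified_bfgs_update_exact_general {K : Type*} [Field K] (Jk1 : Matrix m n K)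
    (xk1 xk : n → K) (y : m → K) (p : n → K) (hp : p = xk - xk1) (hpx : p ⬝ᵥ xk ≠ 0)
    (u : m → K) (hu : u = (1 / (p ⬝ᵥ xk)) • (y - Jk1 *ᵥ p))
    (Jk : Matrix m n K) (hJk : Jk = Jk1 + vecMulVec u p) :
    Jk *ᵥ xk = Jk1 *ᵥ xk1 + y ∧
      Jk *ᵥ (xk - xk1) = -(Jk *ᵥ xk1) + Jk1 *ᵥ xk1 + y := by
  have rank_one_correction : vecMulVec u p *ᵥ xk = y - Jk1 *ᵥ p := by
    rw [hu, one_div, vecMulVec_inv_dotProduct_smul_mulVec _ hpx]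
  have update_eq : Jk *ᵥ xk = Jk1 *ᵥ xk1 + y :=
    calc Jk *ᵥ xk = Jk1 *ᵥ xk + (y - Jk1 *ᵥ p) := by rw [hJk, add_mulVec, rank_one_correction]
      _ = Jk1 *ᵥ (xk - p) + y := by rw [mulVec_sub]; abel
      _ = Jk1 *ᵥ xk1 + y := by rw [hp, sub_sub_cancel]
  refine ⟨update_eq, ?_⟩
  rwa [add_assoc, mulVec_sub_eq_neg_mulVec_add_iff]

end

theorem modified_bfgs_update_exact (n : ℕ)
    (Jk1 : Matrix (Fin n) (Fin n) ℝ) (xk1 xk y : Fin n → ℝ)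
    (p : Fin n → ℝ) (hp : p = xk - xk1)
    (hpx : dotProduct p xk ≠ 0)
    (u : Fin n → ℝ) (hu : u = (1 / dotProduct p xk) • (y - Jk1.mulVec p))
    (Jk : Matrix (Fin n) (Fin n) ℝ) (hJk : Jk = Jk1 + Matrix.vecMulVec u p) :
    Jk.mulVec xk = Jk1.mulVec xk1 + y ∧
    Jk.mulVec (xk - xk1) = -(Jk.mulVec xk1) + Jk1.mulVec xk1 + y :=
  modified_bfgs_update_exact_general Jk1 xk1 xk y p hp hpx u hu Jk hJk
end
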